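/- Let f be a real binary cubic form with distinct roots (squarefree over ℂ). Then the following are equivalent: (1) the real rank of f is 3; (2) Δ(f) > 0; (3) f has three distinct real roots. -/

import Mathlib

open MvPolynomial

noncomputable section

/-- The real linear binary form `a·x + b·y`. -/
def lin (a b : ℝ) : MvPolynomial (Fin 2) ℝ := C a * X 0 + C b * X 1

/-- `f` is a sum of `r` terms `cⱼ · ℓⱼ^d` with `ℓⱼ` nonzero real linear forms. -/
def HasDecomp (f : MvPolynomial (Fin 2) ℝ) (d r : ℕ) : Prop :=
  ∃ c a b : Fin r → ℝ, (∀ j, (a j, b j) ≠ (0, 0)) ∧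
    f = ∑ j, C (c j) * lin (a j) (b j) ^ d

/-- The real (symmetric) rank of a binary form of degree `d`:
the least number of `d`-th powers of real linear forms needed to write `f`. -/
def realRank (f : MvPolynomial (Fin 2) ℝ) (d : ℕ) : ℕ :=
  sInf {r | HasDecomp f d r}

/-- The set of real projective roots of a binary form. -/
def projRoots (f : MvPolynomial (Fin 2) ℝ) : Set (Projectivization ℝ (Fin 2 → ℝ)) :=
  {p | eval p.rep f = 0}

/-- `f` is a product of `d` pairwise non-proportional real linear forms,
i.e. `f` has `d` distinct real roots. -/
def SplitsDistinct (f : MvPolynomial (Fin 2) ℝ) (d : ℕ) : Prop :=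
  ∃ a b : Fin d → ℝ, (∀ j, (a j, b j) ≠ (0, 0)) ∧
    (∀ i j, i ≠ j → a i * b j ≠ a j * b i) ∧
    f = ∏ j, lin (a j) (b j)

/-- `f` has distinct roots, i.e. it is squarefree as a complex polynomial. -/
def SquarefreeC (f : MvPolynomial (Fin 2) ℝ) : Prop :=
  Squarefree (MvPolynomial.map (algebraMap ℝ ℂ) f)

/-- The linear change of variables of `f` by the matrix `A`: `f(A(x,y))`. -/
def subst (A : Matrix (Fin 2) (Fin 2) ℝ) (f : MvPolynomial (Fin 2) ℝ) :
    MvPolynomial (Fin 2) ℝ :=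
  aeval (fun i => C (A i 0) * X 0 + C (A i 1) * X 1) f

/-- The complex rank of a real binary form of degree `d`. -/
def complexRank (f : MvPolynomial (Fin 2) ℝ) (d : ℕ) : ℕ :=
  sInf {r | ∃ a b : Fin r → ℂ, (∀ j, (a j, b j) ≠ (0, 0)) ∧
    MvPolynomial.map (algebraMap ℝ ℂ) f = ∑ j, (C (a j) * X 0 + C (b j) * X 1) ^ d}

/-! An odd function on the plane vanishes somewhere off the origin, so every real binary cubic is a
linear form `ℓ` times a quadratic form `q`, and `27 Δ = disc(q) · Res(ℓ, q)²`.

If `disc(q) ≥ 0`, the cubic is a product `ℓ₀ ℓ₁ ℓ₂` of real linear forms, pairwise non-proportional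
when the cubic is squarefree. Then `Δ > 0` and there are three roots. Rescaling the forms so that
they sum to zero turns `u + v + w = 0 → u³ + v³ + w³ = 3 u v w` into a decomposition of length
three, and no shorter one exists because `Δ(c ℓ³ + c' ℓ'³) = -(c c' det(ℓ, ℓ')³)² ≤ 0`.

If `disc(q) < 0`, the only root is that of `ℓ`, and `Δ < 0`. As `-Δ` is the discriminant of the
Hessian, the Hessian then splits into two non-proportional linear forms, and by Sylvester's
apolarity criterion the cubic is a combination of their cubes.
-/

theorem isLocalHom_mvPolynomial_map {σ R S : Type*} [CommRing R] [CommRing S] {φ : R →+* S}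
    [IsLocalHom φ] (hφ : Function.Injective φ) :
    IsLocalHom (MvPolynomial.map φ : MvPolynomial σ R →+* MvPolynomial σ S) where
  map_nonunit p hp := by
    simpa only [MvPolynomial.isUnit_iff, coeff_map, isUnit_map_iff, IsNilpotent.map_iff hφ] using hp

theorem SquarefreeC.squarefree {f : MvPolynomial (Fin 2) ℝ} (hf : SquarefreeC f) :
    Squarefree f := by
  have := isLocalHom_mvPolynomial_map (σ := Fin 2) (algebraMap ℝ ℂ).injective
  intro g hg
  exact isUnit_of_map_unit (MvPolynomial.map (algebraMap ℝ ℂ)) g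
    (hf _ (by simpa only [map_mul] using map_dvd (MvPolynomial.map (algebraMap ℝ ℂ)) hg))

theorem exists_factors_of_isSquare_discrim {K : Type*} [Field K] [NeZero (2 : K)] {A B D : K}
    (h : IsSquare (discrim A B D)) :
    ∃ α β γ δ : K, A = α * γ ∧ B = α * δ + β * γ ∧ D = β * δ := by
  obtain ⟨s, hs⟩ := h
  by_cases hA : A = 0
  · exact ⟨0, 1, B, D, by simp [hA], by ring, by ring⟩
  · refine ⟨1, (B + s) / (2 * A), A, (B - s) / 2, by ring, by field_simp; ring, ?_⟩
    rw [discrim] at hs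
    field_simp
    linear_combination -hs

section LinearOrder

variable {K : Type*} [CommRing K] [LinearOrder K] [IsStrictOrderedRing K] {A B D x y : K}

theorem right_eq_zero_of_discrim_neg (hdisc : discrim A B D < 0)
    (h : A * x ^ 2 + B * x * y + D * y ^ 2 = 0) : y = 0 := by
  by_contra hy
  have hsq : (2 * A * x + B * y) ^ 2 = discrim A B D * y ^ 2 := by
    rw [discrim]
    linear_combination 4 * A * h
  exact (mul_neg_of_neg_of_pos hdisc (sq_pos_of_ne_zero hy)).not_ge (hsq ▸ sq_nonneg _)

theorem left_eq_zero_of_discrim_neg (hdisc : discrim A B D < 0)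
    (h : A * x ^ 2 + B * x * y + D * y ^ 2 = 0) : x = 0 := by
  refine right_eq_zero_of_discrim_neg (A := D) (B := B) (D := A) (x := y) ?_ ?_
  · rwa [discrim, mul_right_comm, ← discrim]
  · linear_combination h

end LinearOrder

theorem projectivization_mk_eq_mk_iff {K : Type*} [Field K] {v w : Fin 2 → K} (hv : v ≠ 0)
    (hw : w ≠ 0) :
    Projectivization.mk K v hv = Projectivization.mk K w hw ↔ v 0 * w 1 = v 1 * w 0 := by
  rw [Projectivization.mk_eq_mk_iff']
  constructor
  · rintro ⟨t, rfl⟩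
    simp only [Pi.smul_apply, smul_eq_mul]
    ring
  · intro h
    obtain ⟨i, hi⟩ := Function.ne_iff.mp hw
    refine ⟨v i / w i, funext fun j => ?_⟩
    rw [Pi.smul_apply, smul_eq_mul, div_mul_eq_mul_div, div_eq_iff hi]
    fin_cases i <;> fin_cases j <;> simp [h]

theorem exists_ne_zero_eq_zero_of_odd {E : Type*} [AddCommGroup E] [Module ℝ E]
    [TopologicalSpace E] [ContinuousAdd E] [ContinuousSMul ℝ E] (hE : 1 < Module.rank ℝ E)
    {g : E → ℝ} (hg : Continuous g) (hodd : Function.Odd g) : ∃ v ≠ 0, g v = 0 := by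
  have hconn := isConnected_compl_singleton_of_one_lt_rank hE 0
  obtain ⟨w, hw⟩ := hconn.nonempty
  obtain ⟨z, hz, hgz⟩ : ∃ z ∈ ({0} : Set E)ᶜ, g z ≤ 0 := by
    rcases le_total (g w) 0 with h | h
    · exact ⟨w, hw, h⟩
    · exact ⟨-w, neg_ne_zero.mpr hw, by rw [hodd]; exact neg_nonpos.mpr h⟩
  obtain ⟨v, hv, hgv⟩ := hconn.isPreconnected.intermediate_value₂ hz
    (neg_ne_zero.mpr hz : -z ∈ ({0} : Set E)ᶜ) hg.continuousOn continuousOn_const hgz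
    (by rw [hodd]; exact neg_nonneg.mpr hgz)
  exact ⟨v, hv, hgv⟩

section Rank

variable {f : MvPolynomial (Fin 2) ℝ} {d r s : ℕ}

theorem HasDecomp.succ (h : HasDecomp f d r) : HasDecomp f d (r + 1) := by
  obtain ⟨c, a, b, hab, rfl⟩ := h
  refine ⟨Fin.cons 0 c, Fin.cons 1 a, Fin.cons 0 b, Fin.cases (by simp) hab, ?_⟩
  simp only [Fin.sum_univ_succ, Fin.cons_zero, Fin.cons_succ, C_0, zero_mul, zero_add]

theorem HasDecomp.mono (h : HasDecomp f d r) (hrs : r ≤ s) : HasDecomp f d s :=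
  Nat.le_induction h (fun _ _ => HasDecomp.succ) s hrs

theorem HasDecomp.realRank_le (h : HasDecomp f d r) : realRank f d ≤ r :=
  Nat.sInf_le h

theorem HasDecomp.lt_realRank (hs : HasDecomp f d s) (hr : ¬HasDecomp f d r) :
    r < realRank f d := by
  by_contra! hle
  exact hr (HasDecomp.mono (Nat.sInf_mem (s := {r | HasDecomp f d r}) ⟨s, hs⟩) hle)

end Rank

section LinearForms

variable {a b a' b' : ℝ}

@[simp]
theorem eval_lin (x : Fin 2 → ℝ) : eval x (lin a b) = a * x 0 + b * x 1 := by
  simp [lin]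

theorem not_isUnit_lin : ¬IsUnit (lin a b) := fun h => by
  have h0 := h.map (eval (0 : Fin 2 → ℝ))
  simp only [eval_lin, Pi.zero_apply, mul_zero, add_zero, not_isUnit_zero] at h0

theorem ne_zero_of_lin_ne_zero (h : lin a b ≠ 0) : (a, b) ≠ (0, 0) := by
  intro hab
  obtain ⟨rfl, rfl⟩ := Prod.mk.inj hab
  simp [lin] at h

theorem lin_dvd_lin (hab : (a', b') ≠ (0, 0)) (h : a * b' = a' * b) : lin a' b' ∣ lin a b := by
  by_cases ha : a' = 0
  · have hb : b' ≠ 0 := fun hb => hab (by rw [ha, hb])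
    refine ⟨C (b / b'), MvPolynomial.funext fun x => ?_⟩
    obtain rfl : a = 0 := by simpa [ha, hb] using h
    simp only [eval_lin, map_mul, eval_C, ha]
    field_simp
    ring
  · refine ⟨C (a / a'), MvPolynomial.funext fun x => ?_⟩
    simp only [eval_lin, map_mul, eval_C]
    field_simp
    linear_combination -x 1 * h

theorem splitsDistinct_of_squarefree_prod {d : ℕ} {a b : Fin d → ℝ}
    (h : Squarefree (∏ j, lin (a j) (b j))) : SplitsDistinct (∏ j, lin (a j) (b j)) d := by
  have hab (j) : (a j, b j) ≠ (0, 0) :=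
    ne_zero_of_lin_ne_zero (Finset.prod_ne_zero_iff.mp h.ne_zero j (Finset.mem_univ j))
  refine ⟨a, b, hab, fun i j hij hdet => ?_, rfl⟩
  have hdvd : lin (a i) (b i) * lin (a j) (b j) ∣ ∏ j, lin (a j) (b j) := by
    rw [← Finset.prod_pair (f := fun j => lin (a j) (b j)) hij]
    exact Finset.prod_dvd_prod_of_subset _ _ _ (Finset.subset_univ _)
  have hrel : IsRelPrime (lin (a i) (b i)) (lin (a j) (b j)) :=
    .of_squarefree_mul (h.squarefree_of_dvd hdvd)
  exact not_isUnit_lin (hrel (lin_dvd_lin (hab j) hdet) dvd_rfl)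

end LinearForms

section Roots

theorem mem_projRoots {f : MvPolynomial (Fin 2) ℝ} {p : Projectivization ℝ (Fin 2 → ℝ)} :
    p ∈ projRoots f ↔ eval p.rep f = 0 :=
  Iff.rfl

theorem projRoots_mul (f g : MvPolynomial (Fin 2) ℝ) :
    projRoots (f * g) = projRoots f ∪ projRoots g := by
  ext p
  simp [mem_projRoots]

theorem projRoots_prod {ι : Type*} [Fintype ι] (f : ι → MvPolynomial (Fin 2) ℝ) :
    projRoots (∏ i, f i) = ⋃ i, projRoots (f i) := by
  ext p
  simp [mem_projRoots, map_prod, Finset.prod_eq_zero_iff]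

variable {a b a' b' : ℝ}

theorem vec_neg_ne_zero (h : (a, b) ≠ (0, 0)) : ![-b, a] ≠ 0 := by
  contrapose! h
  simpa [and_comm] using h

/-- The projective root `[-b : a]` of the nonzero linear form `a·x + b·y`. -/
def linRoot (a b : ℝ) (h : (a, b) ≠ (0, 0)) : Projectivization ℝ (Fin 2 → ℝ) :=
  Projectivization.mk ℝ ![-b, a] (vec_neg_ne_zero h)

theorem linRoot_eq_linRoot_iff (h : (a, b) ≠ (0, 0)) (h' : (a', b') ≠ (0, 0)) :
    linRoot a b h = linRoot a' b' h' ↔ a * b' = a' * b := by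
  rw [linRoot, linRoot, projectivization_mk_eq_mk_iff]
  simp only [Matrix.cons_val_zero, Matrix.cons_val_one]
  constructor <;> intro heq <;> linarith

theorem projRoots_lin (h : (a, b) ≠ (0, 0)) : projRoots (lin a b) = {linRoot a b h} := by
  ext p
  rw [mem_projRoots, eval_lin, Set.mem_singleton_iff, linRoot]
  conv_rhs => rw [← p.mk_rep, projectivization_mk_eq_mk_iff]
  simp only [Matrix.cons_val_zero, Matrix.cons_val_one]
  constructor <;> intro heq <;> linarith

theorem SplitsDistinct.ncard_projRoots {f : MvPolynomial (Fin 2) ℝ} {d : ℕ}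
    (h : SplitsDistinct f d) : (projRoots f).ncard = d := by
  obtain ⟨a, b, hab, hdet, rfl⟩ := h
  have hinj : Function.Injective fun j => linRoot (a j) (b j) (hab j) := fun i j hij => by
    by_contra hne
    exact hdet i j hne ((linRoot_eq_linRoot_iff _ _).mp hij)
  simp only [projRoots_prod, projRoots_lin (hab _), Set.iUnion_singleton_eq_range]
  rw [← Nat.card_coe_set_eq, Nat.card_range_of_injective hinj, Nat.card_fin]

end Roots

section Quadratics

/-- The binary quadratic form `A·x² + B·xy + D·y²`. -/
def binQuadratic (A B D : ℝ) : MvPolynomial (Fin 2) ℝ :=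
  C A * X 0 ^ 2 + C B * X 0 * X 1 + C D * X 1 ^ 2

variable {A B D : ℝ}

@[simp]
theorem eval_binQuadratic (x : Fin 2 → ℝ) :
    eval x (binQuadratic A B D) = A * x 0 ^ 2 + B * x 0 * x 1 + D * x 1 ^ 2 := by
  simp [binQuadratic]

theorem lin_mul_lin (α β γ δ : ℝ) :
    lin α β * lin γ δ = binQuadratic (α * γ) (α * δ + β * γ) (β * δ) :=
  MvPolynomial.funext fun x => by
    simp only [map_mul, eval_lin, eval_binQuadratic]
    ring

theorem projRoots_binQuadratic_of_discrim_neg (h : discrim A B D < 0) :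
    projRoots (binQuadratic A B D) = ∅ := by
  refine Set.eq_empty_of_forall_notMem fun p hp => p.rep_nonzero ?_
  rw [mem_projRoots, eval_binQuadratic] at hp
  ext i
  fin_cases i
  exacts [left_eq_zero_of_discrim_neg h hp, right_eq_zero_of_discrim_neg h hp]

end Quadratics

section Cubics

/-- The binary cubic form `a₀·x³ + 3a₁·x²y + 3a₂·xy² + a₃·y³`. -/
def binCubic (a₀ a₁ a₂ a₃ : ℝ) : MvPolynomial (Fin 2) ℝ :=
  C a₀ * X 0 ^ 3 + C (3 * a₁) * X 0 ^ 2 * X 1 + C (3 * a₂) * X 0 * X 1 ^ 2 + C a₃ * X 1 ^ 3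

/-- The discriminant `Δ` of `binCubic a₀ a₁ a₂ a₃`, normalized so that it is positive on cubics with
three distinct real roots. -/
def cubicDisc (a₀ a₁ a₂ a₃ : ℝ) : ℝ :=
  4 * (a₀ * a₂ - a₁ ^ 2) * (a₁ * a₃ - a₂ ^ 2) - (a₀ * a₃ - a₁ * a₂) ^ 2

variable {a₀ a₁ a₂ a₃ u v A B D : ℝ}

@[simp]
theorem eval_binCubic (x : Fin 2 → ℝ) :
    eval x (binCubic a₀ a₁ a₂ a₃) =
      a₀ * x 0 ^ 3 + 3 * a₁ * x 0 ^ 2 * x 1 + 3 * a₂ * x 0 * x 1 ^ 2 + a₃ * x 1 ^ 3 := by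
  simp [binCubic]

theorem binCubic_inj {b₀ b₁ b₂ b₃ : ℝ} :
    binCubic a₀ a₁ a₂ a₃ = binCubic b₀ b₁ b₂ b₃ ↔ a₀ = b₀ ∧ a₁ = b₁ ∧ a₂ = b₂ ∧ a₃ = b₃ := by
  refine ⟨fun h => ?_, by rintro ⟨rfl, rfl, rfl, rfl⟩; rfl⟩
  have h_eval (x y : ℝ) := congrArg (eval ![x, y]) h
  simp only [eval_binCubic, Matrix.cons_val_zero, Matrix.cons_val_one] at h_eval
  have h10 := h_eval 1 0
  have h01 := h_eval 0 1
  have h11 := h_eval 1 1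
  have h1n := h_eval 1 (-1)
  refine ⟨?_, ?_, ?_, ?_⟩ <;> linarith

theorem exists_eval_binCubic_eq_zero (a₀ a₁ a₂ a₃ : ℝ) :
    ∃ v ≠ 0, eval v (binCubic a₀ a₁ a₂ a₃) = 0 :=
  exists_ne_zero_eq_zero_of_odd (by simp) (MvPolynomial.continuous_eval _) fun v => by
    simp only [eval_binCubic, Pi.neg_apply]
    ring

theorem exists_binCubic_eq_lin_mul (a₀ a₁ a₂ a₃ : ℝ) :
    ∃ u v A B D : ℝ, (u, v) ≠ (0, 0) ∧
      binCubic a₀ a₁ a₂ a₃ = lin u v * binQuadratic A B D := by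
  obtain ⟨z, hz, hroot⟩ := exists_eval_binCubic_eq_zero a₀ a₁ a₂ a₃
  rw [eval_binCubic] at hroot
  by_cases h0 : z 0 = 0
  · have h1 : z 1 ≠ 0 := fun h1 => hz (by ext i; fin_cases i <;> assumption)
    obtain rfl : a₃ = 0 := by simpa [h0, h1] using hroot
    refine ⟨1, 0, a₀, 3 * a₁, 3 * a₂, by simp, MvPolynomial.funext fun x => ?_⟩
    simp only [map_mul, eval_lin, eval_binQuadratic, eval_binCubic]
    ring
  · set t := z 1 / z 0
    have ht : a₀ + 3 * a₁ * t + 3 * a₂ * t ^ 2 + a₃ * t ^ 3 = 0 := by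
      simp only [t]
      field_simp
      linear_combination hroot
    -- The quotient by `t·x - y`, computed from the `y³` coefficient downwards.
    refine ⟨t, -1, -(3 * a₁ + 3 * a₂ * t + a₃ * t ^ 2), -(3 * a₂ + a₃ * t), -a₃, by simp,
      MvPolynomial.funext fun x => ?_⟩
    simp only [map_mul, eval_lin, eval_binQuadratic, eval_binCubic]
    linear_combination x 0 ^ 3 * ht

theorem lin_mul_binQuadratic (u v A B D : ℝ) :
    lin u v * binQuadratic A B D =
      binCubic (u * A) ((u * B + v * A) / 3) ((u * D + v * B) / 3) (v * D) :=
  MvPolynomial.funext fun x => by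
    simp only [map_mul, eval_lin, eval_binQuadratic, eval_binCubic]
    ring

theorem cubicDisc_of_eq_lin_mul (h : binCubic a₀ a₁ a₂ a₃ = lin u v * binQuadratic A B D) :
    27 * cubicDisc a₀ a₁ a₂ a₃ =
      discrim A B D * eval ![-v, u] (binQuadratic A B D) ^ 2 := by
  rw [lin_mul_binQuadratic, binCubic_inj] at h
  obtain ⟨rfl, rfl, rfl, rfl⟩ := h
  simp only [cubicDisc, discrim, eval_binQuadratic, Matrix.cons_val_zero, Matrix.cons_val_one]
  ring

theorem splitsDistinct_of_eq_lin_mul {f : MvPolynomial (Fin 2) ℝ} (hf : Squarefree f)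
    (h : f = lin u v * binQuadratic A B D) (hdisc : 0 ≤ discrim A B D) :
    SplitsDistinct f 3 := by
  obtain ⟨α, β, γ, δ, rfl, rfl, rfl⟩ :=
    exists_factors_of_isSquare_discrim (Real.isSquare_iff.mpr hdisc)
  have hprod : f = ∏ j, lin (![u, α, γ] j) (![v, β, δ] j) := by
    rw [h, ← lin_mul_lin, Fin.prod_univ_three, mul_assoc]
    rfl
  rw [hprod] at hf ⊢
  exact splitsDistinct_of_squarefree_prod hf

theorem SplitsDistinct.cubicDisc_pos (h : SplitsDistinct (binCubic a₀ a₁ a₂ a₃) 3) :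
    0 < cubicDisc a₀ a₁ a₂ a₃ := by
  obtain ⟨a, b, -, hdet, h⟩ := h
  rw [Fin.prod_univ_three, mul_assoc, lin_mul_lin] at h
  have hsq : 27 * cubicDisc a₀ a₁ a₂ a₃ = ((a 0 * b 1 - a 1 * b 0) *
      (a 0 * b 2 - a 2 * b 0) * (a 1 * b 2 - a 2 * b 1)) ^ 2 := by
    simp only [cubicDisc_of_eq_lin_mul h, discrim, eval_binQuadratic, Matrix.cons_val_zero,
      Matrix.cons_val_one]
    ring
  have h01 := sub_ne_zero.mpr (hdet 0 1 (by decide))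
  have h02 := sub_ne_zero.mpr (hdet 0 2 (by decide))
  have h12 := sub_ne_zero.mpr (hdet 1 2 (by decide))
  have : 0 < 27 * cubicDisc a₀ a₁ a₂ a₃ := by rw [hsq]; positivity
  linarith

theorem SplitsDistinct.hasDecomp_three {f : MvPolynomial (Fin 2) ℝ} (h : SplitsDistinct f 3) :
    HasDecomp f 3 3 := by
  obtain ⟨a, b, hab, hdet, rfl⟩ := h
  let k : Fin 3 → ℝ := ![a 1 * b 2 - a 2 * b 1, a 2 * b 0 - a 0 * b 2, a 0 * b 1 - a 1 * b 0]
  have hk (j) : k j ≠ 0 := by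
    fin_cases j
    exacts [sub_ne_zero.mpr (hdet 1 2 (by decide)), sub_ne_zero.mpr (hdet 2 0 (by decide)),
      sub_ne_zero.mpr (hdet 0 1 (by decide))]
  refine ⟨fun j => k j ^ 3 / (3 * k 0 * k 1 * k 2), a, b, hab, MvPolynomial.funext fun x => ?_⟩
  set ℓ : Fin 3 → ℝ := fun j => a j * x 0 + b j * x 1
  have hsum : k 0 * ℓ 0 + k 1 * ℓ 1 + k 2 * ℓ 2 = 0 := by
    simp only [k, ℓ, Matrix.cons_val]
    ring
  have hcubes : (k 0 * ℓ 0) ^ 3 + (k 1 * ℓ 1) ^ 3 + (k 2 * ℓ 2) ^ 3 =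
      3 * (k 0 * ℓ 0) * (k 1 * ℓ 1) * (k 2 * ℓ 2) := by
    linear_combination ((k 0 * ℓ 0) ^ 2 + (k 1 * ℓ 1) ^ 2 + (k 2 * ℓ 2) ^ 2
      - k 0 * ℓ 0 * (k 1 * ℓ 1) - k 0 * ℓ 0 * (k 2 * ℓ 2) - k 1 * ℓ 1 * (k 2 * ℓ 2)) * hsum
  have h0 := hk 0
  have h1 := hk 1
  have h2 := hk 2
  simp only [map_mul, map_add, map_pow, eval_C, eval_lin, Fin.prod_univ_three,
    Fin.sum_univ_three]
  change ℓ 0 * ℓ 1 * ℓ 2 = k 0 ^ 3 / (3 * k 0 * k 1 * k 2) * ℓ 0 ^ 3 +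
    k 1 ^ 3 / (3 * k 0 * k 1 * k 2) * ℓ 1 ^ 3 + k 2 ^ 3 / (3 * k 0 * k 1 * k 2) * ℓ 2 ^ 3
  field_simp
  linear_combination -hcubes

theorem HasDecomp.cubicDisc_nonpos (h : HasDecomp (binCubic a₀ a₁ a₂ a₃) 3 2) :
    cubicDisc a₀ a₁ a₂ a₃ ≤ 0 := by
  obtain ⟨c, a, b, -, h⟩ := h
  have hsum : ∑ j, C (c j) * lin (a j) (b j) ^ 3 =
      binCubic (∑ j, c j * a j ^ 3) (∑ j, c j * a j ^ 2 * b j) (∑ j, c j * a j * b j ^ 2)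
        (∑ j, c j * b j ^ 3) :=
    MvPolynomial.funext fun x => by
      simp only [map_add, map_mul, map_pow, eval_C, eval_lin, eval_binCubic, Fin.sum_univ_two]
      ring
  rw [hsum, binCubic_inj] at h
  obtain ⟨rfl, rfl, rfl, rfl⟩ := h
  have hsq : cubicDisc (∑ j, c j * a j ^ 3) (∑ j, c j * a j ^ 2 * b j)
      (∑ j, c j * a j * b j ^ 2) (∑ j, c j * b j ^ 3) =
        -(c 0 * c 1 * (a 0 * b 1 - a 1 * b 0) ^ 3) ^ 2 := by
    simp only [cubicDisc, Fin.sum_univ_two]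
    ring
  rw [hsq]
  exact neg_nonpos.mpr (sq_nonneg _)

theorem SplitsDistinct.realRank_eq_three (h : SplitsDistinct (binCubic a₀ a₁ a₂ a₃) 3) :
    realRank (binCubic a₀ a₁ a₂ a₃) 3 = 3 :=
  h.hasDecomp_three.realRank_le.antisymm
    (h.hasDecomp_three.lt_realRank fun h2 => h2.cubicDisc_nonpos.not_gt h.cubicDisc_pos)

theorem ncard_projRoots_lin_mul_of_discrim_neg (huv : (u, v) ≠ (0, 0))
    (hdisc : discrim A B D < 0) : (projRoots (lin u v * binQuadratic A B D)).ncard = 1 := by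
  rw [projRoots_mul, projRoots_binQuadratic_of_discrim_neg hdisc, Set.union_empty,
    projRoots_lin huv, Set.ncard_singleton]

theorem cubicDisc_neg_of_eq_lin_mul (huv : (u, v) ≠ (0, 0))
    (h : binCubic a₀ a₁ a₂ a₃ = lin u v * binQuadratic A B D) (hdisc : discrim A B D < 0) :
    cubicDisc a₀ a₁ a₂ a₃ < 0 := by
  have hres : eval ![-v, u] (binQuadratic A B D) ≠ 0 := fun h0 => huv <| by
    rw [eval_binQuadratic] at h0
    exact Prod.ext (right_eq_zero_of_discrim_neg hdisc h0)
      (neg_eq_zero.mp (left_eq_zero_of_discrim_neg hdisc h0))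
  have := mul_neg_of_neg_of_pos hdisc (sq_pos_of_ne_zero hres)
  linarith [cubicDisc_of_eq_lin_mul h]

-- Sylvester's criterion: the hypotheses say that the cubic is apolar to the product of the dual
-- forms `(β·∂x - α·∂y)(δ·∂x - γ·∂y)`, which kills the cubes of `α·x + β·y` and `γ·x + δ·y`.
theorem hasDecomp_two_of_apolar {α β γ δ : ℝ} (hdet : α * δ - β * γ ≠ 0)
    (h₁ : a₀ * (β * δ) - a₁ * (α * δ + β * γ) + a₂ * (α * γ) = 0)
    (h₂ : a₁ * (β * δ) - a₂ * (α * δ + β * γ) + a₃ * (α * γ) = 0) :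
    HasDecomp (binCubic a₀ a₁ a₂ a₃) 3 2 := by
  -- Each coefficient is read off by evaluating at the root of the other linear form.
  refine ⟨![eval ![δ, -γ] (binCubic a₀ a₁ a₂ a₃) / (α * δ - β * γ) ^ 3,
    eval ![-β, α] (binCubic a₀ a₁ a₂ a₃) / (α * δ - β * γ) ^ 3], ![α, γ], ![β, δ], ?_,
    MvPolynomial.funext fun x => ?_⟩
  · intro j hj
    refine hdet ?_
    fin_cases j <;> obtain ⟨hx, hy⟩ := Prod.mk.inj hj <;>
      simp only [Fin.zero_eta, Fin.mk_one, Matrix.cons_val_zero, Matrix.cons_val_one] at hx hy <;>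
      simp [hx, hy]
  · simp only [Fin.sum_univ_two, Matrix.cons_val_zero, Matrix.cons_val_one, map_add, map_mul,
      map_pow, eval_C, eval_lin, eval_binCubic]
    rw [div_mul_eq_mul_div, div_mul_eq_mul_div, ← add_div, eq_div_iff (pow_ne_zero 3 hdet)]
    linear_combination (-3 * (α * δ - β * γ) * (α * x 0 + β * x 1) * (γ * x 0 + δ * x 1)) *
      (x 0 * h₁ + x 1 * h₂)

theorem hasDecomp_two_of_cubicDisc_neg (h : cubicDisc a₀ a₁ a₂ a₃ < 0) :
    HasDecomp (binCubic a₀ a₁ a₂ a₃) 3 2 := by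
  have hessian_discrim : discrim (a₀ * a₂ - a₁ ^ 2) (a₀ * a₃ - a₁ * a₂) (a₁ * a₃ - a₂ ^ 2) =
      -cubicDisc a₀ a₁ a₂ a₃ := by
    rw [discrim, cubicDisc]
    ring
  obtain ⟨α, β, γ, δ, hP, hQ, hR⟩ := exists_factors_of_isSquare_discrim
    (Real.isSquare_iff.mpr (hessian_discrim ▸ neg_nonneg.mpr h.le))
  have hdet : (α * δ - β * γ) ^ 2 = -cubicDisc a₀ a₁ a₂ a₃ := by
    rw [← hessian_discrim, hP, hQ, hR, discrim]
    ring
  refine hasDecomp_two_of_apolar (α := α) (β := β) (γ := γ) (δ := δ) ?_ ?_ ?_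
  · exact sq_pos_iff.mp (hdet ▸ neg_pos.mpr h)
  all_goals
    rw [← hP, ← hQ, ← hR]
    ring

end Cubics

/-- for a real binary cubic with distinct (complex) roots:
real rank 3 ↔ Δ(f) > 0 ↔ three distinct real roots. -/
theorem stmt2 (a₀ a₁ a₂ a₃ : ℝ) (f : MvPolynomial (Fin 2) ℝ)
    (hf : f = C a₀ * X 0 ^ 3 + C (3 * a₁) * X 0 ^ 2 * X 1 +
      C (3 * a₂) * X 0 * X 1 ^ 2 + C a₃ * X 1 ^ 3)
    (hsf : SquarefreeC f) :
    (realRank f 3 = 3 ↔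
      0 < 4 * (a₀ * a₂ - a₁ ^ 2) * (a₁ * a₃ - a₂ ^ 2) - (a₀ * a₃ - a₁ * a₂) ^ 2) ∧
    (realRank f 3 = 3 ↔ (projRoots f).ncard = 3) := by
  obtain rfl : f = binCubic a₀ a₁ a₂ a₃ := hf
  obtain ⟨u, v, A, B, D, huv, hfac⟩ := exists_binCubic_eq_lin_mul a₀ a₁ a₂ a₃
  rcases le_or_gt 0 (discrim A B D) with hdisc | hdisc
  · have hsplit := splitsDistinct_of_eq_lin_mul hsf.squarefree hfac hdisc
    have hrank := hsplit.realRank_eq_three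
    exact ⟨iff_of_true hrank hsplit.cubicDisc_pos, iff_of_true hrank hsplit.ncard_projRoots⟩
  · have hneg := cubicDisc_neg_of_eq_lin_mul huv hfac hdisc
    have hrank : realRank (binCubic a₀ a₁ a₂ a₃) 3 ≠ 3 :=
      ((hasDecomp_two_of_cubicDisc_neg hneg).realRank_le.trans_lt (by norm_num)).ne
    have hcard : (projRoots (binCubic a₀ a₁ a₂ a₃)).ncard ≠ 3 := by
      rw [hfac, ncard_projRoots_lin_mul_of_discrim_neg huv hdisc]
      norm_num
    exact ⟨iff_of_false hrank hneg.not_gt, iff_of_false hrank hcard⟩
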